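/- Let 𝔳 ⊆ 𝔭 be a 3-dimensional subspace such that R(X,Y)Z ∈ 𝔳 and (∇_V R)(X,Y,Z) ∈ 𝔳 for all X, Y, Z, V ∈ 𝔳. Then there exists a real Lie algebra automorphism φ of 𝔰𝔲(3) with φ(𝔱) = 𝔱, φ(𝔭) = 𝔭 and ⟨φ(X), φ(Y)⟩ = ⟨X, Y⟩ for all X, Y, such that either φ(𝔳) = span{e₁, e₃, e₅} or φ(𝔳) = span{e₁ + e₃, e₂ − e₄, e₆}. (Algebraic core of: every complete 3-dimensional totally geodesic submanifold of nearly Kähler F(ℂ³) is congruent to the real flag manifold F(ℝ³) or to the Berger sphere S³_{ℂ,1/4}(√2).) -/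

import Mathlib

/-!
Identify `𝔭` with `ℂ³` through the entries `(X₁₂, X₂₃, X₃₁)`; then `[X, Y]_𝔭 = -conj (X × Y)`. Let
`g` be the real inner product of `ℂ³`, `ω_k` the Kähler form of the `k`-th coordinate line and
`ω = ∑ ω_k`. The curvature is (`curv_eq`)

  `R(X,Y)Z = -1/4 g(X,Z) Y + 1/4 g(Y,Z) X - 3/4 N(X,Y)Z`,
  `N(X,Y)Z = i (ω(X,Z) Y - ω(Y,Z) X + 2 ω(X,Y) Z - 8 ∑ ω_k(X,Y) Z_k)`,

so that a subspace `u` is `R`-invariant if and only if it is `N`-invariant.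

* An invariant `u` of dimension 3 is Lagrangian (`lagrangian`). Since the dimension is odd, `ω` has a
  kernel vector `ξ` in `u`, and `ω(N(X,Y)Z, ξ) = 0` is a linear system which, if `ω` were nonzero
  on `u`, would give `|ξ_k|² = |ξ|² / 4` for each of the three `k`, which is absurd.
* On a Lagrangian `u` invariance means that the traceless operators `i diag (ω_k(X,Y))` preserve `u`.
  By Cayley-Hamilton one of the `ω_k(X,Y)` is zero (`prod_eq_zero`). Either all `ω_k` vanish on `u`,
  and `u = ⨁ ℝ p_k` for phases `p_k` (`flat_form`), or, up to a cyclic permutation, `u` consists of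
  all `(t ψ, z p, conj z q)` with `t` real, `z` complex and `p`, `q`, `ψ` phases (`sphere_form`).
* Invariance under `∇R` forces the product of the three phases to be real in the first case
  (`flat_phase`) and imaginary in the second (`sphere_phase`).
* A cyclic permutation followed by conjugation with `diag (1, p, p q)` (`phi`) removes two of the
  three phases and makes the third coordinate real, respectively imaginary. This carries `u` into
  the model subspace, and equality holds by dimension.
-/

/- Setup: the homogeneous nearly Kähler flag manifold F(ℂ³) = SU(3)/T². -/

noncomputable section
open Matrix

abbrev M3 := Matrix (Fin 3) (Fin 3) ℂ

def e1 : M3 := (Real.sqrt 2)⁻¹ • !![0, 1, 0; -1, 0, 0; 0, 0, 0]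
def e2 : M3 := (Real.sqrt 2)⁻¹ • !![0, Complex.I, 0; Complex.I, 0, 0; 0, 0, 0]
def e3 : M3 := (Real.sqrt 2)⁻¹ • !![0, 0, 0; 0, 0, 1; 0, -1, 0]
def e4 : M3 := (Real.sqrt 2)⁻¹ • !![0, 0, 0; 0, 0, Complex.I; 0, Complex.I, 0]
def e5 : M3 := (Real.sqrt 2)⁻¹ • !![0, 0, 1; 0, 0, 0; -1, 0, 0]
def e6 : M3 := (Real.sqrt 2)⁻¹ • !![0, 0, Complex.I; 0, 0, 0; Complex.I, 0, 0]

/-- `𝔱`, the subalgebra of diagonal matrices in `𝔰𝔲(3)`. -/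
def tAlg : Submodule ℝ M3 :=
  Submodule.span ℝ
    {Matrix.diagonal ![Complex.I, -Complex.I, 0], Matrix.diagonal ![0, Complex.I, -Complex.I]}

/-- `𝔭`, the orthogonal complement of `𝔱` in `𝔰𝔲(3)`. -/
def pAlg : Submodule ℝ M3 := Submodule.span ℝ {e1, e2, e3, e4, e5, e6}

/-- `𝔤 = 𝔰𝔲(3) = 𝔱 ⊕ 𝔭`. -/
def gAlg : Submodule ℝ M3 := tAlg ⊔ pAlg

/-- difference tensor `D_X Y = (1/2)[X,Y]_𝔭`. -/
def Dmap (πp : M3 → M3) (X Y : M3) : M3 := (2 : ℝ)⁻¹ • πp ⁅X, Y⁆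

/-- curvature tensor
`R(X,Y)Z = D_X D_Y Z − D_Y D_X Z − [[X,Y]_𝔱, Z] − D_{[X,Y]_𝔭} Z`. -/
def Rmap (πt πp : M3 → M3) (X Y Z : M3) : M3 :=
  Dmap πp X (Dmap πp Y Z) - Dmap πp Y (Dmap πp X Z) - ⁅πt ⁅X, Y⁆, Z⁆
    - Dmap πp (πp ⁅X, Y⁆) Z

/-- covariant derivative of the curvature,
`(∇_V R)(X,Y,Z) = D_V(R(X,Y)Z) − R(D_V X,Y)Z − R(X,D_V Y)Z − R(X,Y)(D_V Z)`. -/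
def nablaR (πt πp : M3 → M3) (V X Y Z : M3) : M3 :=
  Dmap πp V (Rmap πt πp X Y Z) - Rmap πt πp (Dmap πp V X) Y Z
    - Rmap πt πp X (Dmap πp V Y) Z - Rmap πt πp X Y (Dmap πp V Z)

/-- the real-valued inner product `⟨X,Y⟩ = −tr(XY)` on `𝔰𝔲(3)`. -/
def iprod (X Y : M3) : ℝ := -((X * Y).trace.re)

/-! ### Coordinates on `𝔭` -/

/-- Coordinates on `𝔭`: the entries `(X₁₂, X₂₃, X₃₁)`, with indices read cyclically. -/
abbrev C3 := Fin 3 → ℂ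

open ComplexConjugate

/-- The element of `𝔭` with entry `z k` in position `(k, k + 1)`, an isomorphism onto `𝔭`. -/
def toM : C3 →ₗ[ℝ] M3 where
  toFun z := !![0, z 0, -conj (z 2); -conj (z 0), 0, z 1; z 2, -conj (z 1), 0]
  map_add' x y := by
    ext i j; fin_cases i <;> fin_cases j <;> simp <;> ring
  map_smul' r x := by
    ext i j; fin_cases i <;> fin_cases j <;> simp

lemma toM_injective : Function.Injective toM := by
  intro x y h
  have h0 := congrFun (congrFun h 0) 1
  have h1 := congrFun (congrFun h 1) 2
  have h2 := congrFun (congrFun h 2) 0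
  simp [toM] at h0 h1 h2
  ext k; fin_cases k <;> simp [*]

/-- The `𝔭`-component of the bracket: `[X, Y]_𝔭 = -conj (X × Y)`. -/
def br (X Y : C3) : C3 := fun k => -conj (X (k+1) * Y (k+2) - X (k+2) * Y (k+1))

/-- `D_X Y` in coordinates. -/
def dd (X Y : C3) : C3 := fun k => (2 : ℂ)⁻¹ * br X Y k

/-- `2i · Im (X k * conj (Y k))`, written without imaginary parts. -/
def tw (X Y : C3) (k : Fin 3) : ℂ := X k * conj (Y k) - conj (X k) * Y k

/-- The diagonal entries of `[X, Y]_𝔱`. -/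
def td (X Y : C3) (k : Fin 3) : ℂ := tw X Y (k+2) - tw X Y k

/-- `R(X, Y)Z` in coordinates. -/
def curv (X Y Z : C3) : C3 := fun k =>
  dd X (dd Y Z) k - dd Y (dd X Z) k - (td X Y k - td X Y (k+1)) * Z k - dd (br X Y) Z k

/-- `(∇_V R)(X, Y, Z)` in coordinates. -/
def ncurv (V X Y Z : C3) : C3 := fun k =>
  dd V (curv X Y Z) k - curv (dd V X) Y Z k - curv X (dd V Y) Z k - curv X Y (dd V Z) k

lemma toM_mem (z : C3) : toM z ∈ pAlg := by
  have h2 : (Real.sqrt 2) ≠ 0 := by positivity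
  have : toM z = (Real.sqrt 2 * (z 0).re) • e1 + (Real.sqrt 2 * (z 0).im) • e2
      + (Real.sqrt 2 * (z 1).re) • e3 + (Real.sqrt 2 * (z 1).im) • e4
      + (Real.sqrt 2 * -(z 2).re) • e5 + (Real.sqrt 2 * (z 2).im) • e6 := by
    simp only [e1, e2, e3, e4, e5, e6, smul_smul, mul_right_comm _ _ (Real.sqrt 2)⁻¹,
      mul_inv_cancel₀ h2, one_mul]
    ext i j
    fin_cases i <;> fin_cases j <;> simp [toM, Complex.ext_iff]
  rw [this]
  refine add_mem (add_mem (add_mem (add_mem (add_mem ?_ ?_) ?_) ?_) ?_) ?_ <;>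
    exact Submodule.smul_mem _ _ (Submodule.subset_span (by simp))

lemma e1_eq : e1 = toM ((Real.sqrt 2)⁻¹ • ![1, 0, 0]) := by
  rw [map_smul, e1]; congr 1; ext i j; fin_cases i <;> fin_cases j <;> simp [toM]
lemma e2_eq : e2 = toM ((Real.sqrt 2)⁻¹ • ![Complex.I, 0, 0]) := by
  rw [map_smul, e2]; congr 1; ext i j; fin_cases i <;> fin_cases j <;> simp [toM]
lemma e3_eq : e3 = toM ((Real.sqrt 2)⁻¹ • ![0, 1, 0]) := by
  rw [map_smul, e3]; congr 1; ext i j; fin_cases i <;> fin_cases j <;> simp [toM]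
lemma e4_eq : e4 = toM ((Real.sqrt 2)⁻¹ • ![0, Complex.I, 0]) := by
  rw [map_smul, e4]; congr 1; ext i j; fin_cases i <;> fin_cases j <;> simp [toM]
lemma e5_eq : e5 = toM ((Real.sqrt 2)⁻¹ • ![0, 0, -1]) := by
  rw [map_smul, e5]; congr 1; ext i j; fin_cases i <;> fin_cases j <;> simp [toM]
lemma e6_eq : e6 = toM ((Real.sqrt 2)⁻¹ • ![0, 0, Complex.I]) := by
  rw [map_smul, e6]; congr 1; ext i j; fin_cases i <;> fin_cases j <;> simp [toM]

lemma pAlg_eq : pAlg = LinearMap.range toM := by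
  apply le_antisymm
  · rw [pAlg, Submodule.span_le]
    rintro x (rfl | rfl | rfl | rfl | rfl | rfl)
    exacts [⟨_, e1_eq.symm⟩, ⟨_, e2_eq.symm⟩, ⟨_, e3_eq.symm⟩, ⟨_, e4_eq.symm⟩,
      ⟨_, e5_eq.symm⟩, ⟨_, e6_eq.symm⟩]
  · rintro _ ⟨z, rfl⟩
    exact toM_mem z

lemma mem_tAlg {X : M3} : X ∈ tAlg ↔ ∃ d : Fin 3 → ℝ,
    X = diagonal (fun k => (d k : ℂ) * Complex.I) ∧ ∑ k, d k = 0 := by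
  rw [tAlg, Submodule.mem_span_pair]
  constructor
  · rintro ⟨a, b, rfl⟩
    refine ⟨![a, b - a, -b], ?_, by simp [Fin.sum_univ_three]⟩
    ext i j; fin_cases i <;> fin_cases j <;> simp
    ring
  · rintro ⟨d, rfl, hd⟩
    refine ⟨d 0, -d 2, ?_⟩
    have h1 : d 1 = -d 0 - d 2 := by
      rw [Fin.sum_univ_three] at hd; linarith
    ext i j; fin_cases i <;> fin_cases j <;> simp [h1]
    ring

lemma lie_toM (X Y : C3) : ⁅toM X, toM Y⁆ = diagonal (td X Y) + toM (br X Y) := by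
  rw [Ring.lie_def]
  ext i j
  fin_cases i <;> fin_cases j <;>
    simp [toM, td, tw, br] <;> ring

lemma diag_td_mem (X Y : C3) : diagonal (td X Y) ∈ tAlg := by
  rw [mem_tAlg]
  refine ⟨fun k => (td X Y k).im, ?_, ?_⟩
  · congr 1; ext1 k
    apply Complex.ext <;> simp [td, tw]
  · simp [Fin.sum_univ_three, td, tw]; ring

lemma decomp_unique {a b : M3} {z w : C3} (ha : a ∈ tAlg) (hb : b ∈ tAlg)
    (h : a + toM z = b + toM w) : a = b ∧ z = w := by
  obtain ⟨d, rfl, -⟩ := mem_tAlg.1 ha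
  obtain ⟨d', rfl, -⟩ := mem_tAlg.1 hb
  have h0 := congrFun (congrFun h 0) 1
  have h1 := congrFun (congrFun h 1) 2
  have h2 := congrFun (congrFun h 2) 0
  simp [toM] at h0 h1 h2
  have : z = w := by ext k; fin_cases k <;> simp [*]
  subst this
  exact ⟨add_right_cancel h, rfl⟩

section coordinates
variable {πt πp : M3 → M3}
  (hdec : ∀ Z ∈ gAlg, πt Z ∈ tAlg ∧ πp Z ∈ pAlg ∧ πt Z + πp Z = Z)
include hdec

lemma proj_lie (X Y : C3) :
    πt ⁅toM X, toM Y⁆ = diagonal (td X Y) ∧ πp ⁅toM X, toM Y⁆ = toM (br X Y) := by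
  have hg : ⁅toM X, toM Y⁆ ∈ gAlg := by
    rw [lie_toM]
    exact Submodule.add_mem_sup (diag_td_mem X Y) (toM_mem _)
  obtain ⟨h1, h2, h3⟩ := hdec _ hg
  rw [pAlg_eq] at h2
  obtain ⟨w, hw⟩ := h2
  rw [← hw] at h3 ⊢
  nth_rw 2 [lie_toM] at h3
  obtain ⟨h4, h5⟩ := decomp_unique h1 (diag_td_mem X Y) h3
  exact ⟨h4, by rw [h5]⟩

lemma Dmap_toM (X Y : C3) : Dmap πp (toM X) (toM Y) = toM (dd X Y) := by
  rw [Dmap, (proj_lie hdec X Y).2, ← map_smul]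
  congr 1; ext k; simp [dd]

lemma Rmap_toM (X Y Z : C3) : Rmap πt πp (toM X) (toM Y) (toM Z) = toM (curv X Y Z) := by
  have h : ⁅diagonal (td X Y), toM Z⁆ =
      toM (fun k => (td X Y k - td X Y (k+1)) * Z k) := by
    rw [Ring.lie_def]
    ext i j
    fin_cases i <;> fin_cases j <;> simp [toM, td, tw, Matrix.vecMul_diagonal] <;> ring
  rw [Rmap, (proj_lie hdec X Y).1, (proj_lie hdec X Y).2]
  simp only [Dmap_toM hdec, h, ← map_sub]
  rfl

lemma nablaR_toM (V X Y Z : C3) :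
    nablaR πt πp (toM V) (toM X) (toM Y) (toM Z) = toM (ncurv V X Y Z) := by
  rw [nablaR]
  simp only [Dmap_toM hdec, Rmap_toM hdec, ← map_sub]
  rfl

end coordinates

/-! ### Curvature-invariant subspaces are Lagrangian -/

/-- The real inner product on `ℂ³`. -/
def gg (X Y : C3) : ℝ := ∑ k, (X k * conj (Y k)).re

/-- The Kähler form of the `k`-th coordinate line. -/
def om (k : Fin 3) (X Y : C3) : ℝ := (X k * conj (Y k)).im

/-- The Kähler form of `ℂ³`. -/
def ω (X Y : C3) : ℝ := ∑ k, om k X Y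

lemma om_swap (k : Fin 3) (X Y : C3) : om k Y X = -om k X Y := by
  simp [om]; ring

lemma ω_swap (X Y : C3) : ω Y X = -ω X Y := by
  simp [ω, om_swap _ X Y]

lemma ω_self (X : C3) : ω X X = 0 := by
  linarith [ω_swap X X]

lemma ω_add (X Y Z : C3) : ω (X + Y) Z = ω X Z + ω Y Z := by
  simp [ω, om, Fin.sum_univ_three]; ring

lemma ω_smul (r : ℝ) (X Z : C3) : ω (r • X) Z = r * ω X Z := by
  simp [ω, om, Fin.sum_univ_three]; ring

lemma gg_self_eq_zero {X : C3} (h : gg X X = 0) : X = 0 := by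
  have h' : ∀ k, (X k * conj (X k)).re = Complex.normSq (X k) := fun k => by
    rw [Complex.mul_conj, Complex.ofReal_re]
  simp only [gg, h'] at h
  rw [Finset.sum_eq_zero_iff_of_nonneg (fun k _ => Complex.normSq_nonneg _)] at h
  ext k
  exact Complex.normSq_eq_zero.1 (h k (Finset.mem_univ k))

/-- The part of `R(X, Y)Z` which is not a real combination of `X` and `Y`. -/
def nn (X Y Z : C3) : C3 := fun k => Complex.I *
  ((ω X Z : ℂ) * Y k - (ω Y Z : ℂ) * X k + 2 * (ω X Y : ℂ) * Z k - 8 * (om k X Y : ℂ) * Z k)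

lemma curv_eq (X Y Z : C3) :
    curv X Y Z = (-(1/4) * gg X Z : ℝ) • Y + (1/4 * gg Y Z : ℝ) • X + (-(3/4) : ℝ) • nn X Y Z := by
  ext k
  fin_cases k <;> apply Complex.ext <;>
    simp [curv, dd, br, td, tw, nn, ω, om, gg, Fin.sum_univ_three] <;> ring

lemma nn_mem {u : Submodule ℝ C3} (hR : ∀ X ∈ u, ∀ Y ∈ u, ∀ Z ∈ u, curv X Y Z ∈ u)
    {X Y Z : C3} (hX : X ∈ u) (hY : Y ∈ u) (hZ : Z ∈ u) : nn X Y Z ∈ u := by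
  have h := hR X hX Y hY Z hZ
  rw [curv_eq] at h
  have h2 := (Submodule.add_mem_iff_right u
    (add_mem (u.smul_mem _ hY) (u.smul_mem _ hX))).1 h
  exact (Submodule.smul_mem_iff u (by norm_num)).1 h2

/-- Pairing of `nn X Y Z` with a vector. -/
lemma ω_nn (X Y Z ξ : C3) : ω (nn X Y Z) ξ = ω X Z * gg Y ξ - ω Y Z * gg X ξ
    + 2 * ω X Y * gg Z ξ - 8 * ∑ k, om k X Y * (Z k * conj (ξ k)).re := by
  simp [nn, ω, om, gg, Fin.sum_univ_three]; ring

/-- A skew form in odd dimension is degenerate. -/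
lemma exists_kernel {u : Submodule ℝ C3} (hdim : Module.finrank ℝ u = 3) :
    (∀ X ∈ u, ∀ Y ∈ u, ω X Y = 0) ∨ ∃ ξ ∈ u, ξ ≠ 0 ∧ ∀ V ∈ u, ω V ξ = 0 := by
  let b := Module.finBasisOfFinrankEq ℝ u hdim
  have hrep : ∀ V (hV : V ∈ u), ∃ c : Fin 3 → ℝ,
      V = c 0 • (b 0 : C3) + c 1 • (b 1 : C3) + c 2 • (b 2 : C3) := by
    intro V hV
    refine ⟨b.repr ⟨V, hV⟩, ?_⟩
    have := congrArg Subtype.val (b.sum_repr ⟨V, hV⟩)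
    rw [Fin.sum_univ_three] at this
    simpa using this.symm
  set w01 := ω (b 0) (b 1) with h01
  set w02 := ω (b 0) (b 2) with h02
  set w12 := ω (b 1) (b 2) with h12
  have hexp : ∀ V ∈ u, ∀ ξ, (ω (b 0) ξ = 0) → (ω (b 1) ξ = 0) → (ω (b 2) ξ = 0) →
      ω V ξ = 0 := by
    intro V hV ξ h0 h1 h2
    obtain ⟨c, rfl⟩ := hrep V hV
    simp [ω_add, ω_smul, h0, h1, h2]
  have h10 : ω (b 1) (b 0) = -w01 := ω_swap _ _
  have h20 : ω (b 2) (b 0) = -w02 := ω_swap _ _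
  have h21 : ω (b 2) (b 1) = -w12 := ω_swap _ _
  by_cases hw : w01 = 0 ∧ w02 = 0 ∧ w12 = 0
  · left
    obtain ⟨ha, hb, hc⟩ := hw
    have key : ∀ i, ∀ X ∈ u, ω X (b i) = 0 := by
      intro i X hX
      apply hexp X hX <;> fin_cases i <;> simp [ω_self, *] <;> linarith
    intro X hX Y hY
    apply hexp X hX <;> rw [ω_swap, key _ Y hY, neg_zero]
  · right
    let ξ : u := w12 • b 0 + (-w02) • b 1 + w01 • b 2
    have hξ : (ξ : C3) = w12 • (b 0 : C3) + (-w02) • (b 1 : C3) + w01 • (b 2 : C3) := by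
      simp [ξ]
    refine ⟨ξ, ξ.2, ?_, ?_⟩
    · intro h0
      apply hw
      have hli := Fintype.linearIndependent_iff.1 b.linearIndependent ![w12, -w02, w01] (by
        rw [Fin.sum_univ_three]
        apply Subtype.ext
        simpa [hξ] using h0)
      exact ⟨hli 2, by simpa using hli 1, hli 0⟩
    · intro V hV
      apply hexp V hV <;> rw [ω_swap, hξ] <;> simp only [ω_add, ω_smul, ω_self, ← h01, ← h02, ← h12,
        h10, h20, h21] <;> ring

/-- A curvature-invariant `3`-dimensional subspace is Lagrangian.  Otherwise let `ξ` span the kernel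
of `ω` on `u` and let `X`, `Y` be orthogonal to `ξ`.  Pairing the invariance conditions with `iξ`
gives a linear system which forces `|ξ k|² = |ξ|² / 4` for each of the three `k`, contradicting
`|ξ|² = ∑ |ξ k|²`. -/
lemma lagrangian {u : Submodule ℝ C3} (hdim : Module.finrank ℝ u = 3)
    (hR : ∀ X ∈ u, ∀ Y ∈ u, ∀ Z ∈ u, curv X Y Z ∈ u) :
    ∀ X ∈ u, ∀ Y ∈ u, ω X Y = 0 := by
  rcases exists_kernel hdim with h | ⟨ξ, hξ, hξ0, hker⟩
  · exact h
  intro X₀ hX₀ Y₀ hY₀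
  by_contra hc₀
  set s := gg ξ ξ with hs
  have hs0 : s ≠ 0 := fun h => hξ0 (gg_self_eq_zero h)
  have hproj : ∀ V ∈ u, ∃ V' ∈ u, gg V' ξ = 0 ∧ ∃ r : ℝ, V' = s • V + r • ξ := by
    intro V hV
    refine ⟨s • V + (-gg V ξ) • ξ, add_mem (u.smul_mem _ hV) (u.smul_mem _ hξ), ?_, _, rfl⟩
    simp only [hs, gg, Fin.sum_univ_three]
    simp
    ring
  obtain ⟨X, hX, hXξ, r, hXr⟩ := hproj X₀ hX₀
  obtain ⟨Y, hY, hYξ, r', hYr⟩ := hproj Y₀ hY₀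
  have hωξ : ∀ V ∈ u, ω ξ V = 0 := fun V hV => by rw [ω_swap, hker V hV, neg_zero]
  have hc : ω X Y ≠ 0 := by
    have h1 : ω Y X₀ = s * ω Y₀ X₀ := by
      rw [hYr, ω_add, ω_smul, ω_smul, hωξ X₀ hX₀, mul_zero, add_zero]
    have h2 : ω X Y = s * ω X₀ Y := by
      nth_rw 1 [hXr]
      rw [ω_add, ω_smul, ω_smul, hωξ Y hY, mul_zero, add_zero]
    rw [h2, ω_swap, h1, ω_swap X₀ Y₀]
    simp [hs0, hc₀]
  set c := ω X Y with hcdef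
  have hYX : ω Y X = -c := ω_swap _ _
  have pair : ∀ A ∈ u, ∀ B ∈ u, ∀ C ∈ u, ω A C * gg B ξ - ω B C * gg A ξ
      + 2 * ω A B * gg C ξ - 8 * ∑ k, om k A B * (C k * conj (ξ k)).re = 0 := by
    intro A hA B hB C hC
    rw [← ω_nn]
    exact hker _ (nn_mem hR hA hB hC)
  -- rows: the forms `om k` on the pairs `(X, Y)`, `(X, ξ)`, `(Y, ξ)`
  let N : Matrix (Fin 3) (Fin 3) ℝ :=
    Matrix.of ![fun k => om k X Y, fun k => om k X ξ, fun k => om k Y ξ]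
  -- columns: the coordinatewise inner products with `ξ` of `X`, `Y`, `ξ`
  let G : Matrix (Fin 3) (Fin 3) ℝ :=
    Matrix.of fun k => ![(X k * conj (ξ k)).re, (Y k * conj (ξ k)).re, (ξ k * conj (ξ k)).re]
  have hNG : N * G = !![0, 0, c * s / 4; 0, c * s / 8, 0; -(c * s / 8), 0, 0] := by
    have p1 := pair X hX Y hY X hX
    have p2 := pair X hX Y hY Y hY
    have p3 := pair X hX Y hY ξ hξ
    have p4 := pair X hX ξ hξ X hX
    have p5 := pair X hX ξ hξ Y hY
    have p6 := pair X hX ξ hξ ξ hξ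
    have p7 := pair Y hY ξ hξ X hX
    have p8 := pair Y hY ξ hξ Y hY
    have p9 := pair Y hY ξ hξ ξ hξ
    simp only [ω_self, hker X hX, hker Y hY, hωξ X hX, hωξ Y hY, hYX, ← hcdef, hXξ, hYξ, ← hs]
      at p1 p2 p3 p4 p5 p6 p7 p8 p9
    ext i j
    rw [Matrix.mul_apply]
    fin_cases i <;> fin_cases j <;> simp only [N, G, Matrix.of_apply] <;> simp at * <;> linarith
  have hdet : N.det ≠ 0 := by
    intro h
    have h2 := congrArg Matrix.det hNG
    rw [Matrix.det_mul, h, zero_mul, Matrix.det_fin_three] at h2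
    simp [hc, hs0] at h2
  have hq : (fun k => (ξ k * conj (ξ k)).re - s / 4) = 0 := by
    apply Matrix.eq_zero_of_mulVec_eq_zero hdet
    have e := fun i => congrFun (congrFun hNG i) 2
    have hsum : ∀ A ∈ u, ∀ B ∈ u, ∑ k, om k A B = ω A B := fun _ _ _ _ => rfl
    have e0 := e 0
    have e1 := e 1
    have e2 := e 2
    have f0 := hsum X hX Y hY
    have f1 := hsum X hX ξ hξ
    have f2 := hsum Y hY ξ hξ
    rw [hker X hX] at f1
    rw [hker Y hY] at f2
    rw [← hcdef] at f0
    rw [Matrix.mul_apply, Fin.sum_univ_three] at e0 e1 e2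
    rw [Fin.sum_univ_three] at f0 f1 f2
    ext i
    rw [Matrix.mulVec, dotProduct, Fin.sum_univ_three]
    fin_cases i <;> simp [N, G] at * <;> grind
  have q0 := congrFun hq 0
  have q1 := congrFun hq 1
  have q2 := congrFun hq 2
  have hsum : s = (ξ 0 * conj (ξ 0)).re + (ξ 1 * conj (ξ 1)).re + (ξ 2 * conj (ξ 2)).re := by
    rw [hs, gg, Fin.sum_univ_three]
  simp only [Pi.zero_apply] at q0 q1 q2
  apply hs0
  linarith

/-! ### Normal forms of curvature-invariant Lagrangian subspaces -/

/-- On a Lagrangian subspace the curvature condition reduces to invariance under the diagonal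
operators `i • diag (om k X Y)`. -/
lemma diag_mem {u : Submodule ℝ C3} (hR : ∀ X ∈ u, ∀ Y ∈ u, ∀ Z ∈ u, curv X Y Z ∈ u)
    (hL : ∀ X ∈ u, ∀ Y ∈ u, ω X Y = 0) {X Y Z : C3} (hX : X ∈ u) (hY : Y ∈ u) (hZ : Z ∈ u) :
    (fun k => Complex.I * (om k X Y : ℂ) * Z k) ∈ u := by
  have h := nn_mem hR hX hY hZ
  have e : nn X Y Z = (-8 : ℝ) • fun k => Complex.I * (om k X Y : ℂ) * Z k := by
    ext k
    simp [nn, hL X hX Y hY, hL X hX Z hZ, hL Y hY Z hZ]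
    ring
  rw [e] at h
  exact (Submodule.smul_mem_iff u (by norm_num)).1 h

lemma exists_phase (x : ℂ) : ∃ p : ℂ, p * conj p = 1 ∧ x = (‖x‖ : ℝ) * p := by
  by_cases h : x = 0
  · exact ⟨1, by simp, by simp [h]⟩
  · have hn : ((‖x‖ : ℝ) : ℂ) ≠ 0 := by simpa using h
    refine ⟨x / ‖x‖, ?_, by field_simp⟩
    rw [map_div₀, Complex.conj_ofReal, div_mul_div_comm, Complex.mul_conj, Complex.normSq_eq_norm_sq]
    push_cast
    field_simp

/-- A set of complex numbers on which `Im (x * conj y)` vanishes lies on a real line. -/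
lemma exists_line (S : Set ℂ) (hS : ∀ x ∈ S, ∀ y ∈ S, (x * conj y).im = 0) :
    ∃ p : ℂ, p * conj p = 1 ∧ ∀ x ∈ S, ∃ t : ℝ, x = t * p := by
  by_cases h : ∃ x ∈ S, x ≠ 0
  · obtain ⟨x, hx, hx0⟩ := h
    obtain ⟨p, hp, hxp⟩ := exists_phase x
    refine ⟨p, hp, fun y hy => ⟨(y * conj p).re, ?_⟩⟩
    have h1 := hS y hy x hx
    have h2 : (y * conj p).im = 0 := by
      rw [hxp, map_mul, Complex.conj_ofReal, mul_left_comm, Complex.im_ofReal_mul] at h1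
      exact (mul_eq_zero.1 h1).resolve_left (by simpa using hx0)
    have h3 : ((y * conj p).re : ℂ) = y * conj p := by
      apply Complex.ext <;> simp only [Complex.ofReal_re, Complex.ofReal_im, h2]
    rw [h3, mul_assoc, mul_comm (conj p), hp, mul_one]
  · push Not at h
    exact ⟨1, by simp, fun x hx => ⟨0, by simp [h x hx]⟩⟩

/-- If all the forms `om k` vanish on `u`, then `u` is a real form of `ℂ³` adapted to the
coordinate lines. -/
lemma flat_form {u : Submodule ℝ C3} (hdim : Module.finrank ℝ u = 3)
    (h0 : ∀ k, ∀ X ∈ u, ∀ Y ∈ u, om k X Y = 0) :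
    ∃ p : C3, (∀ k, p k * conj (p k) = 1) ∧ (∀ k, Pi.single k (p k) ∈ u) ∧
      ∀ X ∈ u, ∀ k, ∃ t : ℝ, X k = t * p k := by
  have hl : ∀ k, ∃ p : ℂ, p * conj p = 1 ∧ ∀ X ∈ u, ∃ t : ℝ, X k = t * p := by
    intro k
    obtain ⟨p, hp, h⟩ := exists_line ((fun X : C3 => X k) '' u) (by
      rintro _ ⟨X, hX, rfl⟩ _ ⟨Y, hY, rfl⟩
      exact h0 k X hX Y hY)
    exact ⟨p, hp, fun X hX => h _ ⟨X, hX, rfl⟩⟩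
  choose p hp hX using hl
  refine ⟨p, hp, ?_, fun X hu k => hX k X hu⟩
  have hle : u ≤ Submodule.span ℝ (Set.range fun k => (Pi.single k (p k) : C3)) := by
    intro X hu
    choose t ht using fun k => hX k X hu
    have : X = ∑ k, t k • (Pi.single k (p k) : C3) := by
      ext j
      simp [ht, Finset.sum_apply, Pi.single_apply]
    rw [this]
    exact sum_mem fun k _ => Submodule.smul_mem _ _ (Submodule.subset_span ⟨k, rfl⟩)
  have heq := Submodule.eq_of_le_of_finrank_le hle (by
    rw [hdim]
    exact (finrank_range_le_card _).trans (by simp))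
  intro k
  rw [heq]
  exact Submodule.subset_span ⟨k, rfl⟩

/-- The vector with coordinates `a`, `b`, `c` at `k`, `k + 1`, `k + 2`. -/
def cyc (k : Fin 3) (a b c : ℂ) : C3 := fun j => ![a, b, c] (j - k)

@[simp] lemma cyc_0 (k : Fin 3) (a b c : ℂ) : cyc k a b c k = a := by
  simp [cyc]
@[simp] lemma cyc_1 (k : Fin 3) (a b c : ℂ) : cyc k a b c (k + 1) = b := by
  simp [cyc]
@[simp] lemma cyc_2 (k : Fin 3) (a b c : ℂ) : cyc k a b c (k + 2) = c := by
  simp [cyc]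

lemma eq_or_eq_add (j k : Fin 3) : j = k ∨ j = k + 1 ∨ j = k + 2 := by
  revert j k; decide

lemma cyc_ext (k : Fin 3) {X Y : C3} (h0 : X k = Y k) (h1 : X (k+1) = Y (k+1))
    (h2 : X (k+2) = Y (k+2)) : X = Y := by
  ext j
  rcases eq_or_eq_add j k with rfl | rfl | rfl <;> assumption

lemma ω_cyc (k : Fin 3) (X Y : C3) : ω X Y = om k X Y + om (k+1) X Y + om (k+2) X Y := by
  rw [ω, Fin.sum_univ_three]
  fin_cases k <;> simp <;> ring

/-- If `i • diag d` preserves a Lagrangian subspace and `d` is real and traceless, then Cayley-Hamilton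
shows that `i * ∏ d` does too, so that some entry of `d` is zero. -/
lemma prod_eq_zero {u : Submodule ℝ C3} (hL : ∀ X ∈ u, ∀ Y ∈ u, ω X Y = 0) (d : Fin 3 → ℝ)
    (hd : ∑ k, d k = 0) (hmem : ∀ Z ∈ u, (fun k => Complex.I * (d k : ℂ) * Z k) ∈ u)
    {Z : C3} (hZ : Z ∈ u) (hZ0 : Z ≠ 0) : d 0 * d 1 * d 2 = 0 := by
  have h1 := hmem _ hZ
  have h3 := hmem _ (hmem _ h1)
  have h4 := hL _ (add_mem (u.smul_mem (-1 : ℝ) h3)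
    (u.smul_mem (d 0 * d 1 + d 1 * d 2 + d 2 * d 0) h1)) _ hZ
  have h5 : d 0 * d 1 * d 2 * gg Z Z = 0 := by
    rw [← h4]
    have h2 : d 2 = -d 0 - d 1 := by
      rw [Fin.sum_univ_three] at hd; linarith
    simp [ω, om, gg, Fin.sum_univ_three, h2]
    ring
  exact (mul_eq_zero.1 h5).resolve_right fun h => hZ0 (gg_self_eq_zero h)

/-- If some form `om j` does not vanish on the Lagrangian `u`, then, up to a cyclic permutation and
phases, `u` is contained in the space of all `(t, z, conj z)` with `t` real and `z` complex, and
contains those with `t = 0`. -/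
lemma sphere_form {u : Submodule ℝ C3}
    (hR : ∀ X ∈ u, ∀ Y ∈ u, ∀ Z ∈ u, curv X Y Z ∈ u)
    (hL : ∀ X ∈ u, ∀ Y ∈ u, ω X Y = 0) {j : Fin 3} {X Y : C3} (hX : X ∈ u) (hY : Y ∈ u)
    (hj : om j X Y ≠ 0) :
    ∃ k, ∃ p q ψ : ℂ, p * conj p = 1 ∧ q * conj q = 1 ∧ ψ * conj ψ = 1 ∧
      cyc k 0 p q ∈ u ∧ cyc k 0 (Complex.I * p) (-Complex.I * q) ∈ u ∧
      ∀ U ∈ u, ∃ (t : ℝ) (z : ℂ), U k = t * ψ ∧ U (k+1) = z * p ∧ U (k+2) = conj z * q := by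
  have hmem := fun Z hZ => diag_mem hR hL hX hY (Z := Z) hZ
  have hX0 : X ≠ 0 := by
    rintro rfl
    simp [om] at hj
  have hprod := prod_eq_zero hL (fun k => om k X Y) (hL X hX Y hY) hmem hX hX0
  obtain ⟨k, hk⟩ : ∃ k, om k X Y = 0 := by
    rcases mul_eq_zero.1 hprod with h | h
    · rcases mul_eq_zero.1 h with h | h
      exacts [⟨_, h⟩, ⟨_, h⟩]
    · exact ⟨_, h⟩
  have hsum := hL X hX Y hY
  rw [ω_cyc k, hk, zero_add] at hsum
  set δ := om (k+1) X Y with hδ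
  have h2 : om (k+2) X Y = -δ := by linarith
  have hδ0 : δ ≠ 0 := by
    intro h
    rcases eq_or_eq_add j k with rfl | rfl | rfl
    · exact hj hk
    · exact hj h
    · exact hj (by rw [h2, h, neg_zero])
  -- the operator `diag(0, i, -i)` preserves `u`, hence so does the projection `-J²`
  have hJ : ∀ Z ∈ u, cyc k 0 (Complex.I * Z (k+1)) (-Complex.I * Z (k+2)) ∈ u := by
    intro Z hZ
    have := u.smul_mem δ⁻¹ (hmem Z hZ)
    convert this using 1
    have hδc : (δ : ℂ) ≠ 0 := by exact_mod_cast hδ0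
    apply cyc_ext k <;> simp [hk, ← hδ, h2] <;> field_simp
  have hP : ∀ Z ∈ u, cyc k 0 (Z (k+1)) (Z (k+2)) ∈ u := by
    intro Z hZ
    have := u.smul_mem (-1 : ℝ) (hJ _ (hJ Z hZ))
    convert this using 1
    apply cyc_ext k <;> simp [← mul_assoc]
  have hrel : ∀ U ∈ u, X (k+1) * conj (U (k+1)) = conj (X (k+2)) * U (k+2) := by
    intro U hU
    have e1 := hL _ (hP X hX) _ hU
    have e2 := hL _ (hJ X hX) _ hU
    rw [ω_cyc k] at e1 e2
    simp [om] at e1 e2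
    apply Complex.ext <;> simp <;> linarith
  have hnorm : Complex.normSq (X (k+1)) = Complex.normSq (X (k+2)) := by
    have := hrel X hX
    rw [Complex.mul_conj, mul_comm, Complex.mul_conj] at this
    exact_mod_cast this
  have hX1 : X (k+1) ≠ 0 := by
    intro h
    apply hδ0
    simp [hδ, om, h]
  obtain ⟨p, hp, hXp⟩ := exists_phase (X (k+1))
  obtain ⟨q, hq, hXq⟩ := exists_phase (X (k+2))
  have hnn : ‖X (k+2)‖ = ‖X (k+1)‖ := by
    rw [Complex.normSq_eq_norm_sq, Complex.normSq_eq_norm_sq] at hnorm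
    exact ((sq_eq_sq₀ (norm_nonneg _) (norm_nonneg _)).1 hnorm).symm
  rw [hnn] at hXq
  set ρ := ‖X (k+1)‖ with hρ
  have hρ0 : ρ ≠ 0 := by simpa [hρ] using hX1
  have hρc : (ρ : ℂ) ≠ 0 := by exact_mod_cast hρ0
  obtain ⟨ψ, hψ, hline⟩ := exists_line ((fun U : C3 => U k) '' u) (by
    rintro _ ⟨U, hU, rfl⟩ _ ⟨V, hV, rfl⟩
    have e1 := hL _ hU _ hV
    have e2 := hL _ (hP U hU) _ hV
    rw [ω_cyc k] at e1 e2
    simp only [om, cyc_0, cyc_1, cyc_2, zero_mul, Complex.zero_im] at e1 e2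
    linarith)
  have hW : cyc k 0 p q ∈ u := by
    have := u.smul_mem ρ⁻¹ (hP X hX)
    convert this using 1
    apply cyc_ext k <;> simp [hXp, hXq] <;> field_simp
  have hJW : cyc k 0 (Complex.I * p) (-Complex.I * q) ∈ u := by
    have := u.smul_mem ρ⁻¹ (hJ X hX)
    convert this using 1
    apply cyc_ext k <;> simp [hXp, hXq] <;> field_simp
  refine ⟨k, p, q, ψ, hp, hq, hψ, hW, hJW, fun U hU => ?_⟩
  obtain ⟨t, ht⟩ := hline _ ⟨U, hU, rfl⟩
  have h := hrel U hU
  rw [hXp, hXq, map_mul, Complex.conj_ofReal, mul_assoc, mul_assoc] at h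
  have h' := mul_left_cancel₀ hρc h
  refine ⟨t, U (k+1) * conj p, ht, ?_, ?_⟩
  · linear_combination -U (k+1) * hp
  · rw [map_mul, Complex.conj_conj]
    linear_combination -U (k+2) * hq - q * h'

/-! ### The covariant derivative of the curvature -/

lemma ncurv_flat (p : C3) (hp : ∀ k, p k * conj (p k) = 1) :
    ncurv (Pi.single 0 (p 0)) (Pi.single 0 (p 0)) (Pi.single 1 (p 1)) (Pi.single 2 (p 2)) 0 =
      -(3/8) * (p 0 * p 1 * p 2 - conj (p 0 * p 1 * p 2)) * p 0 := by
  have hc : ∀ k, conj (p k) = (p k)⁻¹ := fun k => eq_inv_of_mul_eq_one_right (hp k)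
  have h0 : ∀ k, p k ≠ 0 := fun k h => by simpa [h] using hp k
  have := h0 0; have := h0 1; have := h0 2
  have hc2 : conj (2 : ℂ) = 2 := map_ofNat _ 2
  simp [ncurv, curv, dd, br, td, tw, hc, hc2]
  field_simp
  ring

lemma ncurv_sphere (k : Fin 3) (p q ψ : ℂ) (hp : p * conj p = 1) (hq : q * conj q = 1)
    (hψ : ψ * conj ψ = 1) :
    ncurv (cyc k 0 p q) (cyc k 0 p q) (cyc k 0 (Complex.I * p) (-Complex.I * q))
      (cyc k 0 p q) k = 6 * Complex.I * conj (p * q * ψ) * ψ := by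
  have hcp : conj p = p⁻¹ := eq_inv_of_mul_eq_one_right hp
  have hcq : conj q = q⁻¹ := eq_inv_of_mul_eq_one_right hq
  have hcψ : conj ψ = ψ⁻¹ := eq_inv_of_mul_eq_one_right hψ
  have hp0 : p ≠ 0 := fun h => by simp [h] at hp
  have hq0 : q ≠ 0 := fun h => by simp [h] at hq
  have hψ0 : ψ ≠ 0 := fun h => by simp [h] at hψ
  have hc2 : conj (2 : ℂ) = 2 := map_ofNat _ 2
  fin_cases k <;> simp [ncurv, curv, dd, br, td, tw, cyc, hcp, hcq, hcψ, hc2] <;> field_simp <;>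
    ring

/-- In the flat case `∇R`-invariance makes the product of the three phases real. -/
lemma flat_phase {p : C3} (hp : ∀ k, p k * conj (p k) = 1) {t : ℝ}
    (h : ncurv (Pi.single 0 (p 0)) (Pi.single 0 (p 0)) (Pi.single 1 (p 1)) (Pi.single 2 (p 2)) 0
      = t * p 0) : (p 0 * p 1 * p 2).im = 0 := by
  rw [ncurv_flat p hp, Complex.sub_conj] at h
  have hp0 : p 0 ≠ 0 := fun h => by simpa [h] using hp 0
  simpa using congrArg Complex.im (mul_right_cancel₀ hp0 h)

/-- In the spherical case `∇R`-invariance makes the product of the three phases imaginary. -/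
lemma sphere_phase {k : Fin 3} {p q ψ : ℂ} (hp : p * conj p = 1) (hq : q * conj q = 1)
    (hψ : ψ * conj ψ = 1) {t : ℝ}
    (h : ncurv (cyc k 0 p q) (cyc k 0 p q) (cyc k 0 (Complex.I * p) (-Complex.I * q))
      (cyc k 0 p q) k = t * ψ) : (p * q * ψ).re = 0 := by
  rw [ncurv_sphere k p q ψ hp hq hψ] at h
  have hψ0 : ψ ≠ 0 := fun h => by simp [h] at hψ
  have h2 := congrArg Complex.im (mul_right_cancel₀ hψ0 h)
  rw [mul_right_comm, Complex.mul_I_im, Complex.ofReal_im, show (6 : ℂ) = ((6 : ℝ) : ℂ) by norm_num,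
    Complex.re_ofReal_mul, Complex.conj_re] at h2
  linarith

lemma add_one_add (k : Fin 3) : k + 1 + 1 = k + 2 ∧ k + 1 + 2 = k := by
  revert k; decide

/-! ### Isometric automorphisms and the model subspaces -/

/-- The automorphism of `𝔰𝔲(3)` given by the cyclic permutation of indices by `k` followed by
conjugation with `diag g`. -/
def phi (k : Fin 3) (g : C3) : M3 →ₗ[ℝ] M3 where
  toFun X := Matrix.of fun i j => g i * X (i + k) (j + k) * conj (g j)
  map_add' X Y := by ext i j; simp; ring
  map_smul' r X := by ext i j; simp; ring

section automorphism
variable (k : Fin 3) {g : C3} (hg : ∀ i, g i * conj (g i) = 1)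

lemma phi_toM (z : C3) : phi k g (toM z) = toM fun i => g i * conj (g (i+1)) * z (i + k) := by
  fin_cases k <;> ext i j <;> fin_cases i <;> fin_cases j <;> simp [phi, toM] <;> ring

include hg

lemma phi_mul (X Y : M3) : phi k g (X * Y) = phi k g X * phi k g Y := by
  ext i j
  simp only [phi, LinearMap.coe_mk, AddHom.coe_mk, Matrix.of_apply, Matrix.mul_apply,
    Finset.mul_sum, Finset.sum_mul]
  rw [← Equiv.sum_comp (Equiv.addRight k)]
  refine Finset.sum_congr rfl fun l _ => ?_
  simp only [Equiv.coe_addRight]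
  linear_combination -(g i * X (i + k) (l + k) * Y (l + k) (j + k) * conj (g j)) * hg l

lemma phi_lie (X Y : M3) : phi k g ⁅X, Y⁆ = ⁅phi k g X, phi k g Y⁆ := by
  rw [Ring.lie_def, Ring.lie_def, map_sub, phi_mul k hg, phi_mul k hg]

lemma phi_trace (X : M3) : (phi k g X).trace = X.trace := by
  simp only [Matrix.trace, Matrix.diag_apply, phi, LinearMap.coe_mk, AddHom.coe_mk, Matrix.of_apply]
  rw [← Equiv.sum_comp (Equiv.addRight k) fun i => X i i]
  refine Finset.sum_congr rfl fun l _ => ?_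
  simp only [Equiv.coe_addRight]
  linear_combination X (l + k) (l + k) * hg l

lemma phi_iprod (X Y : M3) : iprod (phi k g X) (phi k g Y) = iprod X Y := by
  rw [iprod, ← phi_mul k hg, phi_trace k hg, iprod]

lemma phi_injective : Function.Injective (phi k g) := by
  intro X Y h
  ext i j
  have h1 := congrFun (congrFun h (i - k)) (j - k)
  simp only [phi, LinearMap.coe_mk, AddHom.coe_mk, Matrix.of_apply, sub_add_cancel] at h1
  have h0 : ∀ i, g i ≠ 0 := fun i h => by simpa [h] using hg i
  have h2 := mul_right_cancel₀ ((map_ne_zero _).2 (h0 _)) h1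
  exact mul_left_cancel₀ (h0 _) h2

lemma map_phi_eq {W : Submodule ℝ M3} (h : ∀ X ∈ W, phi k g X ∈ W) : W.map (phi k g) = W := by
  apply Submodule.eq_of_le_of_finrank_eq
  · rintro _ ⟨X, hX, rfl⟩
    exact h X hX
  · exact (Submodule.equivMapOfInjective _ (phi_injective k hg) W).finrank_eq.symm

lemma map_phi_tAlg : tAlg.map (phi k g) = tAlg := by
  apply map_phi_eq k hg
  intro X hX
  obtain ⟨d, rfl, hd⟩ := mem_tAlg.1 hX
  refine mem_tAlg.2 ⟨fun i => d (i + k), ?_, ?_⟩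
  · ext i j
    simp only [phi, LinearMap.coe_mk, AddHom.coe_mk, Matrix.of_apply, Matrix.diagonal_apply,
      add_left_inj]
    split_ifs with h
    · subst h
      linear_combination (d (i + k) : ℂ) * Complex.I * hg i
    · simp
  · rw [← hd]
    exact Equiv.sum_comp (Equiv.addRight k) d

lemma map_phi_pAlg : pAlg.map (phi k g) = pAlg := by
  apply map_phi_eq k hg
  rw [pAlg_eq]
  rintro _ ⟨z, rfl⟩
  exact ⟨_, (phi_toM k z).symm⟩

/-- An inclusion of `φ(v)` in the span of three vectors is an equality, by dimension. -/
lemma map_phi_span {v : Submodule ℝ M3} (hdim : Module.finrank ℝ v = 3) {a b c : M3}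
    (h : ∀ X ∈ v, phi k g X ∈ Submodule.span ℝ {a, b, c}) :
    v.map (phi k g) = Submodule.span ℝ {a, b, c} := by
  apply Submodule.eq_of_le_of_finrank_le
  · rintro _ ⟨X, hX, rfl⟩
    exact h X hX
  · rw [← (Submodule.equivMapOfInjective _ (phi_injective k hg) v).finrank_eq, hdim]
    classical
    have := finrank_span_finset_le_card (R := ℝ) ({a, b, c} : Finset M3)
    rw [Set.finrank] at this
    rw [Finset.coe_insert, Finset.coe_pair] at this
    exact this.trans Finset.card_le_three

end automorphism

/-- The phases for which conjugation with `diag (ph p q)` divides the first two coordinates by `p`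
and `q`, and multiplies the third by `p * q`. -/
def ph (p q : ℂ) : C3 := ![1, p, p * q]

lemma ph_unit {p q : ℂ} (hp : p * conj p = 1) (hq : q * conj q = 1) (i : Fin 3) :
    ph p q i * conj (ph p q i) = 1 := by
  fin_cases i
  · simp [ph]
  · simpa [ph] using hp
  · simp [ph]
    linear_combination q * conj q * hp + hq

lemma phi_ph (k : Fin 3) {p q : ℂ} (hp : p * conj p = 1) (z : C3) :
    phi k (ph p q) (toM z) = toM ![conj p * z k, conj q * z (k + 1), p * q * z (k + 2)] := by
  rw [phi_toM]
  congr 1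
  ext i
  fin_cases i
  · simp [ph]
  · simp [ph, add_comm k, -mul_eq_mul_right_iff]
    linear_combination conj q * z (1 + k) * hp
  · simp [ph, add_comm k]

lemma mem_span_flat (t : Fin 3 → ℝ) :
    toM ![(t 0 : ℂ), (t 1 : ℂ), (t 2 : ℂ)] ∈ Submodule.span ℝ {e1, e3, e5} := by
  have h2 : (Real.sqrt 2 : ℂ) ≠ 0 := by
    rw [Complex.ofReal_ne_zero]; positivity
  refine Submodule.mem_span_triple.2
    ⟨Real.sqrt 2 * t 0, Real.sqrt 2 * t 1, Real.sqrt 2 * -t 2, ?_⟩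
  rw [e1_eq, e3_eq, e5_eq, ← map_smul, ← map_smul, ← map_smul, ← map_add, ← map_add]
  congr 1
  ext i
  fin_cases i <;> simp <;> field_simp

lemma mem_span_sphere (z : ℂ) (t : ℝ) :
    toM ![z, conj z, t * Complex.I] ∈ Submodule.span ℝ {e1 + e3, e2 - e4, e6} := by
  have h2 : (Real.sqrt 2 : ℂ) ≠ 0 := by
    rw [Complex.ofReal_ne_zero]; positivity
  have h3 : Real.sqrt 2 * Real.sqrt 2 = 2 := Real.mul_self_sqrt (by norm_num)
  refine Submodule.mem_span_triple.2
    ⟨Real.sqrt 2 * z.re, Real.sqrt 2 * z.im, Real.sqrt 2 * t, ?_⟩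
  rw [e1_eq, e2_eq, e3_eq, e4_eq, e6_eq, ← map_add, ← map_sub, ← map_smul, ← map_smul,
    ← map_smul, ← map_add, ← map_add]
  congr 1
  ext i
  fin_cases i <;> apply Complex.ext <;> simp <;> grind

/-- Every 3-dimensional subspace `𝔳 ⊆ 𝔭` invariant under `R`
and `∇R` is carried, by some isometric real Lie algebra automorphism `φ` of
`𝔰𝔲(3)` preserving `𝔱` and `𝔭`, to either `span{e₁,e₃,e₅}` (tangent to the
real flag manifold `F(ℝ³)`) or `span{e₁+e₃, e₂−e₄, e₆}` (tangent to the
Berger sphere `S³_{ℂ,1/4}(√2)`). -/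
theorem three_dimensional_invariant_subspace_FC3
    (πt πp : M3 → M3)
    (hdec : ∀ Z ∈ gAlg, πt Z ∈ tAlg ∧ πp Z ∈ pAlg ∧ πt Z + πp Z = Z)
    (v : Submodule ℝ M3) (hdim : Module.finrank ℝ v = 3) (hvp : v ≤ pAlg)
    (hR : ∀ X ∈ v, ∀ Y ∈ v, ∀ Z ∈ v, Rmap πt πp X Y Z ∈ v)
    (hnR : ∀ V ∈ v, ∀ X ∈ v, ∀ Y ∈ v, ∀ Z ∈ v, nablaR πt πp V X Y Z ∈ v) :
    ∃ φ : M3 →ₗ[ℝ] M3,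
      (∀ X ∈ gAlg, ∀ Y ∈ gAlg, φ ⁅X, Y⁆ = ⁅φ X, φ Y⁆) ∧
      Submodule.map φ tAlg = tAlg ∧
      Submodule.map φ pAlg = pAlg ∧
      (∀ X ∈ gAlg, ∀ Y ∈ gAlg, iprod (φ X) (φ Y) = iprod X Y) ∧
      (Submodule.map φ v = Submodule.span ℝ {e1, e3, e5} ∨
        Submodule.map φ v = Submodule.span ℝ {e1 + e3, e2 - e4, e6}) := by
  set u : Submodule ℝ C3 := v.comap toM with hu
  have hvu : v = u.map toM := by
    rw [hu, Submodule.map_comap_eq_of_le (hvp.trans pAlg_eq.le)]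
  have hudim : Module.finrank ℝ u = 3 := by
    rw [(Submodule.equivMapOfInjective _ toM_injective u).finrank_eq, ← hvu, hdim]
  have hR' : ∀ X ∈ u, ∀ Y ∈ u, ∀ Z ∈ u, curv X Y Z ∈ u := fun X hX Y hY Z hZ => by
    rw [hu, Submodule.mem_comap, ← Rmap_toM hdec]
    exact hR _ hX _ hY _ hZ
  have hnR' : ∀ V ∈ u, ∀ X ∈ u, ∀ Y ∈ u, ∀ Z ∈ u, ncurv V X Y Z ∈ u :=
    fun V hV X hX Y hY Z hZ => by
      rw [hu, Submodule.mem_comap, ← nablaR_toM hdec]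
      exact hnR _ hV _ hX _ hY _ hZ
  have hL := lagrangian hudim hR'
  suffices ∃ k, ∃ p q : ℂ, p * conj p = 1 ∧ q * conj q = 1 ∧
      ((∀ U ∈ u, phi k (ph p q) (toM U) ∈ Submodule.span ℝ {e1, e3, e5}) ∨
        ∀ U ∈ u, phi k (ph p q) (toM U) ∈ Submodule.span ℝ {e1 + e3, e2 - e4, e6}) by
    obtain ⟨k, p, q, hp, hq, h⟩ := this
    have hg := ph_unit hp hq
    refine ⟨phi k (ph p q), fun X _ Y _ => phi_lie k hg X Y, map_phi_tAlg k hg,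
      map_phi_pAlg k hg, fun X _ Y _ => phi_iprod k hg X Y,
      h.imp (fun h => map_phi_span k hg hdim ?_) fun h => map_phi_span k hg hdim ?_⟩ <;>
    · rw [hvu]
      rintro _ ⟨U, hU, rfl⟩
      exact h U hU
  by_cases hflat : ∀ k, ∀ X ∈ u, ∀ Y ∈ u, om k X Y = 0
  · obtain ⟨p, hp, hpu, hform⟩ := flat_form hudim hflat
    obtain ⟨t, ht⟩ := hform _ (hnR' _ (hpu 0) _ (hpu 0) _ (hpu 1) _ (hpu 2)) 0
    have him := flat_phase hp ht
    refine ⟨0, p 0, p 1, hp 0, hp 1, Or.inl fun U hU => ?_⟩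
    choose s hs using hform U hU
    have hreal : ((p 0 * p 1 * p 2).re : ℂ) = p 0 * p 1 * p 2 :=
      Complex.ext rfl (by rw [him, Complex.ofReal_im])
    convert mem_span_flat ![s 0, s 1, s 2 * (p 0 * p 1 * p 2).re] using 1
    rw [phi_ph 0 (hp 0)]
    congr 1
    ext i
    fin_cases i
    · simp [hs]
      linear_combination (s 0 : ℂ) * hp 0
    · simp [hs]
      linear_combination (s 1 : ℂ) * hp 1
    · simp [hs, -Complex.mul_re, hreal]
      ring
  · push Not at hflat
    obtain ⟨j, X, hX, Y, hY, hj⟩ := hflat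
    obtain ⟨k, p, q, ψ, hp, hq, hψ, hW, hJW, hform⟩ :=
      sphere_form hR' hL hX hY hj
    obtain ⟨t, z, ht, -⟩ := hform _ (hnR' _ hW _ hW _ hJW _ hW)
    have hre := sphere_phase hp hq hψ ht
    -- the shift by `k + 1` puts the real coordinate in position `2`
    refine ⟨k + 1, p, q, hp, hq, Or.inr fun U hU => ?_⟩
    obtain ⟨s, w, h0, h1, h2⟩ := hform U hU
    have him : ((p * q * ψ).im : ℂ) * Complex.I = p * q * ψ := by
      nth_rw 2 [← Complex.re_add_im (p * q * ψ)]
      rw [hre, Complex.ofReal_zero, zero_add]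
    convert mem_span_sphere w (s * (p * q * ψ).im) using 1
    rw [phi_ph _ hp]
    rw [(add_one_add k).1, (add_one_add k).2, h0, h1, h2]
    congr 1
    ext i
    fin_cases i
    · simp
      linear_combination w * hp
    · simp
      linear_combination conj w * hq
    · simp only [Complex.ofReal_mul]
      simp [-Complex.mul_im]
      linear_combination -(s : ℂ) * him

end
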